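/- Let $N \geq 3$, $k$ an integer with $0 \leq k < N-2$, and let $0 < \alpha < \gamma < N$ with $\alpha < N-k$. Let $K \subset \mathbb{R}^N$ be the coordinate subspace $\mathbb{R}^k \times \{0\} \subset \mathbb{R}^N$ (so $d_K(y) = |y''|$ where $y = (y', y'')$), and let $B \subset \mathbb{R}^N$ be a bounded set. Then $\sup_{z \in \mathbb{R}^N} \int_{B} |y - z|^{-N+\gamma}\, |y''|^{-\alpha}\, dy < \infty$. -/

import Mathlib

open MeasureTheory
open scoped ENNReal

lemma aux_anti {a b : ℝ≥0∞} (h : a ≤ b) {s : ℝ} (hs : 0 ≤ s) : b ^ (-s) ≤ a ^ (-s) := by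
  rw [ENNReal.rpow_neg, ENNReal.rpow_neg]
  exact ENNReal.inv_le_inv.mpr (ENNReal.rpow_le_rpow h hs)

lemma aux_half {a b : ℝ≥0∞} (ha : a ≠ ⊤) (h : a ≤ b) {s t : ℝ} (hs : 0 ≤ s) (ht : 0 ≤ t)
    (hst : 0 < s + t) : a ^ (-s) * b ^ (-t) ≤ a ^ (-(s + t)) := by
  rcases eq_or_ne a 0 with rfl | h0
  · rw [ENNReal.zero_rpow_of_neg (y := -(s + t)) (by linarith)]; exact le_top
  · rw [neg_add, ENNReal.rpow_add _ _ h0 ha]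
    exact mul_le_mul_right (aux_anti h ht) _

lemma aux_young {a b : ℝ≥0∞} (ha : a ≠ ⊤) (hb : b ≠ ⊤) {s t : ℝ} (hs : 0 ≤ s) (ht : 0 ≤ t)
    (hst : 0 < s + t) : a ^ (-s) * b ^ (-t) ≤ a ^ (-(s + t)) + b ^ (-(s + t)) := by
  rcases le_total a b with h | h
  · exact (aux_half ha h hs ht hst).trans le_self_add
  · rw [mul_comm, add_comm s t]
    exact (aux_half hb h ht hs (by linarith)).trans le_add_self

lemma aux_rpow_sum {ι : Type*} (s : Finset ι) (f : ι → ℝ) (x : ℝ≥0∞) (h0 : x ≠ 0) (h1 : x ≠ ⊤) :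
    x ^ (-∑ i ∈ s, f i) = ∏ i ∈ s, x ^ (-f i) := by
  classical
  induction s using Finset.induction_on with
  | empty => simp
  | insert a s ha ih =>
    rw [Finset.sum_insert ha, Finset.prod_insert ha, neg_add, ENNReal.rpow_add _ _ h0 h1, ih]

lemma aux_prod {ι : Type*} [Fintype ι] (β : ι → ℝ) (hβ : ∀ i, 0 ≤ β i) (b : ℝ)
    (hb : ∑ i, β i = b) (hb0 : b ≠ 0) (X : ℝ) (hX : 0 ≤ X) (x : ι → ℝ)
    (hx : ∀ i, β i ≠ 0 → |x i| ≤ X) :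
    ENNReal.ofReal (X ^ (-b)) ≤ ∏ i, ‖x i‖ₑ ^ (-β i) := by
  rcases hX.eq_or_lt with rfl | hpos
  · rw [Real.zero_rpow (by simpa using hb0)]; simp
  · rw [← ENNReal.ofReal_rpow_of_pos hpos, ← hb, aux_rpow_sum _ _ _ (by simpa using hpos) (by simp)]
    refine Finset.prod_le_prod' fun i _ => ?_
    by_cases h : β i = 0
    · simp [h]
    · refine aux_anti ?_ (hβ i)
      rw [Real.enorm_eq_ofReal_abs]
      exact ENNReal.ofReal_le_ofReal (hx i h)

lemma aux_pi (n : ℕ) (f : Fin n → ℝ → ℝ≥0∞) (hf : ∀ i, Measurable (f i)) :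
    ∫⁻ x : Fin n → ℝ, ∏ i, f i (x i) = ∏ i, ∫⁻ t, f i t := by
  induction n with
  | zero => simp [volume_pi]
  | succ n ih =>
    have h := (volume_preserving_piFinSuccAbove (fun _ : Fin (n+1) => ℝ) 0).symm
    rw [← h.lintegral_comp_emb (MeasurableEquiv.measurableEmbedding _)]
    simp only [MeasurableEquiv.piFinSuccAbove_symm_apply, Fin.insertNthEquiv, Fin.prod_univ_succ,
      Fin.insertNth_zero, Equiv.coe_fn_mk, Fin.cons_succ, Fin.cons_zero, Fin.zero_succAbove, cast_eq]
    rw [← ih (fun i => f i.succ) (fun i => hf _)]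
    have hm : Measurable fun x : Fin n → ℝ => ∏ i, f i.succ (x i) :=
      Finset.measurable_prod _ fun i _ => (hf _).comp (measurable_pi_apply i)
    exact lintegral_prod_mul (μ := volume) (ν := volume) (f := f 0)
      (g := fun x : Fin n → ℝ => ∏ i, f i.succ (x i)) (hf 0).aemeasurable hm.aemeasurable

lemma aux_one (p : ℝ) (hp0 : 0 ≤ p) (hp : p < 1) :
    ∫⁻ t in Set.Ioc (-1:ℝ) 1, ‖t‖ₑ ^ (-p) < ⊤ := by
  have h2 : IntervalIntegrable (fun x : ℝ => |x| ^ (-p)) volume (-1) 1 := by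
    refine _root_.intervalIntegrable_of_even (fun x => by simp) fun y hy => ?_
    refine (intervalIntegral.intervalIntegrable_rpow' (r := -p) (by linarith)).congr ?_
    intro x hx
    rw [Set.uIoc_of_le hy.le] at hx
    simp [abs_of_pos hx.1]
  rw [intervalIntegrable_iff_integrableOn_Ioc_of_le (by norm_num)] at h2
  have h3 := h2.2
  refine lt_of_le_of_lt (le_of_eq (lintegral_congr_ae ?_)) h3
  refine ae_restrict_of_ae ?_
  filter_upwards [Measure.ae_ne volume (0:ℝ)] with x hx
  rw [Real.enorm_eq_ofReal_abs, ENNReal.ofReal_rpow_of_pos (abs_pos.2 hx),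
    Real.enorm_eq_ofReal (by positivity)]

lemma aux_bound (p R : ℝ) (hp0 : 0 ≤ p) (hp : p < 1) :
    ∃ C : ℝ≥0∞, C ≠ ⊤ ∧ ∀ z : ℝ, ∫⁻ t in Set.Icc (-R) R, ‖t - z‖ₑ ^ (-p) ≤ C := by
  refine ⟨volume (Set.Icc (-R) R) + ∫⁻ t in Set.Ioc (-1:ℝ) 1, ‖t‖ₑ ^ (-p), ?_, fun z => ?_⟩
  · exact ENNReal.add_ne_top.2 ⟨by simp, (aux_one p hp0 hp).ne⟩
  · let g : ℝ → ℝ≥0∞ := (Set.Ioc (-1:ℝ) 1).indicator fun t => ‖t‖ₑ ^ (-p)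
    have hle : ∀ t : ℝ, ‖t - z‖ₑ ^ (-p) ≤ 1 + g (t - z) := by
      intro t
      by_cases h : t - z ∈ Set.Ioc (-1:ℝ) 1
      · simp only [g, Set.indicator_of_mem h]; exact le_add_self
      · refine le_trans ?_ le_self_add
        have : (1:ℝ≥0∞) ≤ ‖t - z‖ₑ := by
          rw [Real.enorm_eq_ofReal_abs, ENNReal.one_le_ofReal]
          by_contra hc
          have := abs_lt.1 (not_le.1 hc)
          exact h ⟨this.1, this.2.le⟩
        simpa using aux_anti this hp0
    calc _ ≤ ∫⁻ t in Set.Icc (-R) R, (1 + g (t - z)) := lintegral_mono hle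
      _ = volume (Set.Icc (-R) R) + ∫⁻ t in Set.Icc (-R) R, g (t - z) := by
        rw [lintegral_add_left measurable_const]; simp
      _ ≤ volume (Set.Icc (-R) R) + ∫⁻ t, g (t - z) := by
        exact add_le_add le_rfl (setLIntegral_le_lintegral _ _)
      _ = _ := by
        rw [lintegral_sub_right_eq_self g z, lintegral_indicator measurableSet_Ioc]

theorem stmt_9 (N k : ℕ) (hN : 3 ≤ N) (hk : k + 2 < N) (α γ : ℝ)
    (hα : 0 < α) (hαγ : α < γ) (hγ : γ < (N : ℝ)) (hαk : α < (N : ℝ) - k)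
    (B : Set (EuclideanSpace ℝ (Fin N))) (hB : Bornology.IsBounded B) :
    ∃ Cb : ℝ, ∀ z : EuclideanSpace ℝ (Fin N),
      (∫ y in B, ‖y - z‖ ^ (-(N : ℝ) + γ) *
          (Real.sqrt (∑ i : Fin N, if k ≤ (i : ℕ) then (y i) ^ 2 else 0)) ^ (-α)) ≤ Cb := by
  obtain ⟨R, hR⟩ := hB.exists_norm_le
  have hNk : (0:ℝ) < N - k := by linarith
  have hNα : (0:ℝ) < N - α := by linarith
  let a : Fin N → ℝ := fun i => if k ≤ (i : ℕ) then α / (N - k) else 0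
  have ha0 : ∀ i, 0 ≤ a i := by intro i; simp only [a]; split_ifs <;> positivity
  have ha1 : ∀ i, a i < 1 := by
    intro i; simp only [a]; split_ifs
    · rwa [div_lt_one hNk]
    · norm_num
  have hcard : (Finset.univ.filter fun i : Fin N => k ≤ (i : ℕ)).card = N - k := by
    have : (Finset.univ.filter fun i : Fin N => k ≤ (i : ℕ)) = Finset.Ici ⟨k, by omega⟩ := by
      ext i; simp [Fin.le_def]
    rw [this, Fin.card_Ici]
  have hasum : ∑ i, a i = α := by
    simp only [a]
    rw [← Finset.sum_filter, Finset.sum_const, hcard, nsmul_eq_mul, Nat.cast_sub (by omega)]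
    field_simp
  let s : Fin N → ℝ := fun i => (N - γ) / (N - α) * (1 - a i)
  have hq : 0 < ((N:ℝ) - γ) / (N - α) := div_pos (by linarith) hNα
  have hq1 : ((N:ℝ) - γ) / (N - α) < 1 := by rw [div_lt_one hNα]; linarith
  have hs0 : ∀ i, 0 < s i := fun i => mul_pos hq (by linarith [ha1 i])
  have hssum : ∑ i, s i = N - γ := by
    simp only [s]
    rw [← Finset.mul_sum, Finset.sum_sub_distrib, hasum]
    simp
    field_simp
  have hp : ∀ i, s i + a i < 1 := by
    intro i; simp only [s]; nlinarith [ha1 i]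
  choose C hC hCb using fun i => aux_bound (s i + a i) R (by linarith [hs0 i, ha0 i]) (hp i)
  refine ⟨(∏ i, (C i + C i)).toReal, fun z => ?_⟩
  let F : Fin N → ℝ → ℝ≥0∞ := fun i => (Set.Icc (-R) R).indicator
    fun t => ‖t - z i‖ₑ ^ (-(s i + a i)) + ‖t‖ₑ ^ (-(s i + a i))
  have hF : ∀ i, Measurable (F i) := fun i =>
    Measurable.indicator (by fun_prop) measurableSet_Icc
  have hFC : ∀ i, ∫⁻ t, F i t ≤ C i + C i := by
    intro i
    rw [lintegral_indicator measurableSet_Icc, lintegral_add_left (by fun_prop)]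
    have h0 := hCb i 0
    simp only [sub_zero] at h0
    exact add_le_add (hCb i (z i)) h0
  refine (le_abs_self _).trans ?_
  rw [← Real.norm_eq_abs]
  refine (norm_integral_le_lintegral_norm _).trans ?_
  refine ENNReal.toReal_mono (ENNReal.prod_ne_top fun i _ => by simp [hC i]) ?_
  have key : ∀ y ∈ B, ENNReal.ofReal ‖‖y - z‖ ^ (-(N : ℝ) + γ) *
          (Real.sqrt (∑ i : Fin N, if k ≤ (i : ℕ) then (y i) ^ 2 else 0)) ^ (-α)‖
        ≤ ∏ i, F i (y i) := by
    intro y hy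
    rw [Real.norm_of_nonneg (by positivity), ENNReal.ofReal_mul (by positivity)]
    have e : -(N:ℝ) + γ = -(N - γ) := by ring
    rw [e]
    have h1 := aux_prod s (fun i => (hs0 i).le) _ hssum (by linarith) ‖y - z‖ (norm_nonneg _)
      (fun i => y i - z i) (fun i _ => by simpa using PiLp.norm_apply_le (y - z) i)
    have h2 := aux_prod a ha0 _ hasum hα.ne'
      (Real.sqrt (∑ i : Fin N, if k ≤ (i : ℕ) then (y i) ^ 2 else 0)) (Real.sqrt_nonneg _)
      (fun i => y i) (fun i hi => by
        have hki : k ≤ (i:ℕ) := by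
          by_contra h; exact hi (by simp [a, h])
        refine Real.abs_le_sqrt ?_
        have := Finset.single_le_sum (f := fun i : Fin N => if k ≤ (i : ℕ) then (y i) ^ 2 else 0)
          (fun j _ => by dsimp only; split_ifs <;> positivity) (Finset.mem_univ i)
        simpa [hki] using this)
    refine (mul_le_mul' h1 h2).trans ?_
    rw [← Finset.prod_mul_distrib]
    refine Finset.prod_le_prod' fun i _ => ?_
    have hmem : y i ∈ Set.Icc (-R) R := by
      rw [Set.mem_Icc, ← abs_le]
      exact (PiLp.norm_apply_le y i).trans (hR y hy)
    simp only [F, Set.indicator_of_mem hmem]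
    exact aux_young (by simp) (by simp) (hs0 i).le (ha0 i) (by linarith [hs0 i, ha0 i])
  have hFm : Measurable fun y : Fin N → ℝ => ∏ i, F i (y i) :=
    Finset.measurable_prod _ fun i _ => (hF i).comp (measurable_pi_apply i)
  calc _ ≤ ∫⁻ y in B, ∏ i, F i (y i) := by
        refine setLIntegral_mono ?_ key
        exact hFm.comp (PiLp.volume_preserving_ofLp (Fin N)).measurable
    _ ≤ ∫⁻ y : EuclideanSpace ℝ (Fin N), ∏ i, F i (y i) := setLIntegral_le_lintegral _ _
    _ = ∫⁻ y : Fin N → ℝ, ∏ i, F i (y i) :=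
        (PiLp.volume_preserving_ofLp (Fin N)).lintegral_comp hFm
    _ = ∏ i, ∫⁻ t, F i t := aux_pi N F hF
    _ ≤ _ := Finset.prod_le_prod' fun i _ => hFC i
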